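/- arXiv:quant-ph/9706001 — 2 statements merged into one kernel-verified Lean document; each statement's English description precedes it below -/
import Mathlib

section
/- Let 𝔥 be a separable, infinite dimensional complex Hilbert space and ψ a unit vector in 𝔥, and let d_ψ(p,q) := ⟨pψ, qψ⟩ for projections p,q on 𝔥. Then d_ψ is tracially bounded; that is, there is a constant C such that |β_ψ(p_ξ)| ≤ C for every unit vector ξ in the algebraic tensor product 𝔥 ⊗_alg 𝔥, where β_ψ is the linear functional on K(𝔥) • K(𝔥) associated with d_ψ. Consequently tracial boundedness is a strictly weaker condition than tensor boundedness. -/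
/- Common background definitions: decoherence functionals on the projection
lattice of a complex Hilbert space, boundedness/additivity notions, trace class
operators, and an axiomatisation of the Hilbert space tensor product
`𝔥 ⊗ 𝔥` together with the operator tensor product. -/

noncomputable section

open scoped ComplexInnerProductSpace ComplexOrder
open ContinuousLinearMap

universe u

variable {E : Type u} [NormedAddCommGroup E] [InnerProductSpace ℂ E] [CompleteSpace E]
variable {G : Type u} [NormedAddCommGroup G] [InnerProductSpace ℂ G] [CompleteSpace G]

/-- `p` is an orthogonal projection on a Hilbert space. -/
def IsOrthoProj (p : E →L[ℂ] E) : Prop :=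
  IsIdempotentElem p ∧ IsSelfAdjoint p

/-- `p` is an operator of finite rank. -/
def HasFiniteRank (p : E →L[ℂ] E) : Prop :=
  FiniteDimensional ℂ ↥(LinearMap.range (p : E →ₗ[ℂ] E))

/-- A decoherence functional on the lattice of projections `P(𝔥)`
(modelled as a function on all pairs of bounded operators whose defining
properties refer only to its values at pairs of orthogonal projections). -/
structure IsDecoherenceFunctional (d : (E →L[ℂ] E) → (E →L[ℂ] E) → ℂ) : Prop where
  hermitian : ∀ p q, IsOrthoProj p → IsOrthoProj q → d p q = starRingEnd ℂ (d q p)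
  pos : ∀ p, IsOrthoProj p → 0 ≤ d p p
  normalized : d 1 1 = 1
  orthoadd : ∀ p₁ p₂ q, IsOrthoProj p₁ → IsOrthoProj p₂ → IsOrthoProj q →
    p₁ * p₂ = 0 → d (p₁ + p₂) q = d p₁ q + d p₂ q

/-- A decoherence functional is bounded if `{|d(p,q)|}` is a bounded set. -/
def DFBounded (d : (E →L[ℂ] E) → (E →L[ℂ] E) → ℂ) : Prop :=
  ∃ C : ℝ, ∀ p q, IsOrthoProj p → IsOrthoProj q → ‖d p q‖ ≤ C

/-- Countable additivity of a decoherence functional: for every countable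
pairwise orthogonal family of projections summing (strongly) to `P`,
`d (P, q) = ∑ d (pᵢ, q)`. -/
def DFCountablyAdditive (d : (E →L[ℂ] E) → (E →L[ℂ] E) → ℂ) : Prop :=
  ∀ (p : ℕ → E →L[ℂ] E) (P q : E →L[ℂ] E),
    (∀ i, IsOrthoProj (p i)) → IsOrthoProj P → IsOrthoProj q →
    (∀ i j, i ≠ j → p i * p j = 0) →
    (∀ x : E, HasSum (fun i => p i x) (P x)) →
    HasSum (fun i => d (p i) q) (d P q)

/-- Complete additivity of a decoherence functional. -/
def DFCompletelyAdditive (d : (E →L[ℂ] E) → (E →L[ℂ] E) → ℂ) : Prop :=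
  ∀ (ι : Type u) (p : ι → E →L[ℂ] E) (P q : E →L[ℂ] E),
    (∀ i, IsOrthoProj (p i)) → IsOrthoProj P → IsOrthoProj q →
    (∀ i j, i ≠ j → p i * p j = 0) →
    (∀ x : E, HasSum (fun i => p i x) (P x)) →
    HasSum (fun i => d (p i) q) (d P q)

/-- A bilinear form `D` on `B(𝔥) × B(𝔥)` is bounded. -/
def IsBoundedBilinear (D : (E →L[ℂ] E) →ₗ[ℂ] (E →L[ℂ] E) →ₗ[ℂ] ℂ) : Prop :=
  ∃ C : ℝ, ∀ x y : E →L[ℂ] E, ‖D x y‖ ≤ C * ‖x‖ * ‖y‖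

/-- The bilinear form `D` extends the decoherence functional `d`. -/
def ExtendsDF (D : (E →L[ℂ] E) →ₗ[ℂ] (E →L[ℂ] E) →ₗ[ℂ] ℂ)
    (d : (E →L[ℂ] E) → (E →L[ℂ] E) → ℂ) : Prop :=
  ∀ p q, IsOrthoProj p → IsOrthoProj q → D p q = d p q

/-- `T` is a trace class operator (via the standard characterisation: the sums
`∑ |⟪eᵢ, T fᵢ⟫|` over finite orthonormal families are uniformly bounded). -/
def IsTraceClass (T : E →L[ℂ] E) : Prop :=
  ∃ C : ℝ, ∀ (n : ℕ) (e f : Fin n → E), Orthonormal ℂ e → Orthonormal ℂ f →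
    ∑ i, ‖⟪e i, T (f i)⟫‖ ≤ C

/-- The trace of an operator computed in the Hilbert basis `b` (for a trace
class operator this is basis independent and is the usual trace). -/
def traceAlong {ι : Type*} (b : HilbertBasis ι ℂ E) (T : E →L[ℂ] E) : ℂ :=
  ∑' i, ⟪b i, T (b i)⟫

/-- The rank one orthogonal projection `p_ξ` onto the span of a unit vector `ξ`. -/
def rankOneProj (ξ : E) : E →L[ℂ] E :=
  (innerSL ℂ ξ).smulRight ξ

/-- An axiomatisation of the Hilbert space tensor product `G = E ⊗ E`:
a bilinear map `tmul` into `G` multiplying inner products and having dense span. -/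
structure HilbertTensorProduct (E G : Type u) [NormedAddCommGroup E]
    [InnerProductSpace ℂ E] [NormedAddCommGroup G] [InnerProductSpace ℂ G] :
    Type u where
  tmul : E →ₗ[ℂ] E →ₗ[ℂ] G
  inner_tmul : ∀ a b c d : E, ⟪tmul a b, tmul c d⟫ = ⟪a, c⟫ * ⟪b, d⟫
  dense_span : Dense (↑(Submodule.span ℂ (Set.range fun z : E × E => tmul z.1 z.2)) : Set G)

/-- The algebraic tensor product `E ⊗_alg E`, viewed as a (dense) subspace of `G`. -/
def HilbertTensorProduct.algSpan (J : HilbertTensorProduct E G) : Submodule ℂ G :=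
  Submodule.span ℂ (Set.range fun z : E × E => J.tmul z.1 z.2)

/-- The Hilbert space tensor product together with the operator tensor product
`(x, y) ↦ x ⊗ y` on bounded operators. -/
structure OperatorTensor (E G : Type u) [NormedAddCommGroup E]
    [InnerProductSpace ℂ E] [NormedAddCommGroup G] [InnerProductSpace ℂ G]
    extends HilbertTensorProduct E G where
  op : (E →L[ℂ] E) → (E →L[ℂ] E) → (G →L[ℂ] G)
  op_tmul : ∀ (x y : E →L[ℂ] E) (a b : E), op x y (tmul a b) = tmul (x a) (y b)

/-- The algebraic tensor product `K(𝔥) • K(𝔥)`: the span in `B(G)` of the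
operators `x ⊗ y` with `x, y` compact. -/
def OperatorTensor.compactSpan (J : OperatorTensor E G) : Submodule ℂ (G →L[ℂ] G) :=
  Submodule.span ℂ {T | ∃ x y : E →L[ℂ] E,
    IsCompactOperator (⇑x) ∧ IsCompactOperator (⇑y) ∧ T = J.op x y}

/-- `β` is the linear functional on `K(𝔥) • K(𝔥)` induced by the bilinear form
`D`, i.e. `β (x ⊗ y) = D (x, y)` for compact `x, y`. -/
def IsBetaFor (J : OperatorTensor E G)
    (D : (E →L[ℂ] E) →ₗ[ℂ] (E →L[ℂ] E) →ₗ[ℂ] ℂ)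
    (β : ↥J.compactSpan →ₗ[ℂ] ℂ) : Prop :=
  ∀ x y : E →L[ℂ] E, IsCompactOperator (⇑x) → IsCompactOperator (⇑y) →
    ∀ hm : J.op x y ∈ J.compactSpan, β ⟨J.op x y, hm⟩ = D x y

/-- `β` is bounded for the operator norm (inherited from `B(G)`). -/
def BetaNormBounded (J : OperatorTensor E G) (β : ↥J.compactSpan →ₗ[ℂ] ℂ) : Prop :=
  ∃ C : ℝ, ∀ S : J.compactSpan, ‖β S‖ ≤ C * ‖(S : G →L[ℂ] G)‖

/-- A decoherence functional is tensor bounded if its associated functional `β`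
on `K(𝔥) • K(𝔥)` is bounded for the (pre-)C*-norm. -/
def IsTensorBounded (J : OperatorTensor E G)
    (d : (E →L[ℂ] E) → (E →L[ℂ] E) → ℂ) : Prop :=
  ∃ D, IsBoundedBilinear D ∧ ExtendsDF D d ∧
    ∃ β, IsBetaFor J D β ∧ BetaNormBounded J β

/-- `β` is uniformly bounded on the projections `p_ξ`, `ξ` a unit vector of the
algebraic tensor product `𝔥 ⊗_alg 𝔥`. -/
def BetaTraciallyBounded (J : OperatorTensor E G) (β : ↥J.compactSpan →ₗ[ℂ] ℂ) : Prop :=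
  ∃ C : ℝ, ∀ ξ : G, ξ ∈ J.toHilbertTensorProduct.algSpan → ‖ξ‖ = 1 →
    ∀ hm : rankOneProj ξ ∈ J.compactSpan, ‖β ⟨rankOneProj ξ, hm⟩‖ ≤ C

/-- A decoherence functional is tracially bounded if it is bounded and its
associated functional `β` is uniformly bounded on rank one projections `p_ξ`
with `ξ` a unit vector in `𝔥 ⊗_alg 𝔥`. -/
def IsTraciallyBounded (J : OperatorTensor E G)
    (d : (E →L[ℂ] E) → (E →L[ℂ] E) → ℂ) : Prop :=
  DFBounded d ∧ ∃ D, IsBoundedBilinear D ∧ ExtendsDF D d ∧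
    ∃ β, IsBetaFor J D β ∧ BetaTraciallyBounded J β

/-!
The functional `β_ψ` is represented by a bounded operator which is not of trace class. Let
`c : G → 𝔥` be the contraction `a ⊗ b ↦ ⟪ψ, b⟫ a`, that is, the adjoint of `a ↦ a ⊗ ψ`, and let
`M ξ = ψ ⊗ c ξ`. Checking on elementary tensors gives `β_ψ (|x⟩⟨y|) = ⟪y, M x⟫`, i.e.
`β_ψ (T) = tr (T M)`. Cauchy–Schwarz and `‖c‖ ≤ ‖ψ‖` bound `β_ψ` on the projections `p_ξ`. On the
other hand, for an orthonormal sequence `e` and a unit multiple `φ` of `ψ`, the partial isometries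
`∑_{i < n} |e i ⊗ φ⟩⟨φ ⊗ e i|` have norm at most one, while `β_ψ` takes the value `n ‖ψ‖ ^ 2` on
them.
-/

open InnerProductSpace

section RCLike

variable {𝕜 V W ι : Type*} [RCLike 𝕜] [NormedAddCommGroup V] [InnerProductSpace 𝕜 V]
  [NormedAddCommGroup W] [InnerProductSpace 𝕜 W]

theorem isCompactOperator_rankOne (v : V) (w : W) : IsCompactOperator (rankOne 𝕜 v w) := by
  rw [rankOne_def']
  exact (isCompactOperator_of_locallyCompactSpace_dom (innerSL 𝕜 w)).clm_comp
    (toSpanSingleton 𝕜 v)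

theorem norm_sum_rankOne_le_one {v : ι → V} {w : ι → W} (hv : Orthonormal 𝕜 v)
    (hw : Orthonormal 𝕜 w) (s : Finset ι) : ‖∑ i ∈ s, rankOne 𝕜 (v i) (w i)‖ ≤ 1 := by
  refine opNorm_le_bound _ zero_le_one fun z => ?_
  rw [one_mul, ← sq_le_sq₀ (norm_nonneg _) (norm_nonneg _)]
  calc ‖(∑ i ∈ s, rankOne 𝕜 (v i) (w i)) z‖ ^ 2
      = ‖∑ i ∈ s, inner 𝕜 (w i) z • v i‖ ^ 2 := by simp only [sum_apply, rankOne_apply]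
    _ = ∑ i ∈ s, ‖inner 𝕜 (w i) z‖ ^ 2 := by
        rw [← inner_self_eq_norm_sq (𝕜 := 𝕜), hv.inner_sum]
        simp only [RCLike.conj_mul, map_sum, ← RCLike.ofReal_pow, RCLike.ofReal_re]
    _ ≤ ‖z‖ ^ 2 := hw.sum_inner_products_le z

theorem exists_orthonormal_nat (hV : ¬ FiniteDimensional 𝕜 V) :
    ∃ e : ℕ → V, Orthonormal 𝕜 e := by
  let b := Module.Basis.ofVectorSpace 𝕜 V
  have : Infinite (Module.Basis.ofVectorSpaceIndex 𝕜 V) := by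
    by_contra h
    have := not_infinite_iff_finite.mp h
    exact hV b.finiteDimensional_of_finite
  exact ⟨_, gramSchmidtNormed_orthonormal
    (b.linearIndependent.comp _ (Infinite.natEmbedding _).injective)⟩

end RCLike

theorem sesquilinear_mem_span_diagonal {V W : Type*} [AddCommGroup V] [Module ℂ V]
    [AddCommGroup W] [Module ℂ W] (B : V →ₗ[ℂ] V →ₗ⋆[ℂ] W) (x y : V) :
    B x y ∈ Submodule.span ℂ (Set.range fun v => B v v) := by
  have polarization : B x y = (1 / 4 : ℂ) • (B (x + y) (x + y) - B (x - y) (x - y)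
      + Complex.I • B (x + Complex.I • y) (x + Complex.I • y)
      - Complex.I • B (x - Complex.I • y) (x - Complex.I • y)) := by
    simp only [map_add, map_sub, map_smul, map_smulₛₗ, LinearMap.add_apply, LinearMap.sub_apply,
      LinearMap.smul_apply, Complex.conj_I]
    match_scalars <;> ring_nf <;> norm_num [Complex.I_sq]
  have diagonal_mem (v : V) : B v v ∈ Submodule.span ℂ (Set.range fun v => B v v) :=
    Submodule.subset_span ⟨v, rfl⟩
  rw [polarization]
  exact Submodule.smul_mem _ _ <| sub_mem (add_mem (sub_mem (diagonal_mem _) (diagonal_mem _))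
    (Submodule.smul_mem _ _ (diagonal_mem _))) (Submodule.smul_mem _ _ (diagonal_mem _))

variable {H K : Type u} [NormedAddCommGroup H] [InnerProductSpace ℂ H]
  [NormedAddCommGroup K] [InnerProductSpace ℂ K]

namespace HilbertTensorProduct

theorem norm_tmul (J : HilbertTensorProduct H K) (a b : H) : ‖J.tmul a b‖ = ‖a‖ * ‖b‖ := by
  have h : ‖J.tmul a b‖ ^ 2 = (‖a‖ * ‖b‖) ^ 2 := by
    have := J.inner_tmul a b a b
    simp only [inner_self_eq_norm_sq_to_K, Complex.coe_algebraMap] at this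
    rw [mul_pow]
    exact_mod_cast this
  exact (sq_eq_sq₀ (norm_nonneg _) (by positivity)).mp h

theorem orthonormal_tmul_left {ι : Type*} (J : HilbertTensorProduct H K) {e f : ι → H}
    (he : Orthonormal ℂ e) (hf : ∀ i, ‖f i‖ = 1) : Orthonormal ℂ fun i => J.tmul (e i) (f i) :=
  ⟨fun i => by rw [norm_tmul, he.1, hf, one_mul],
    fun i j hij => (J.inner_tmul _ _ _ _).trans (by rw [he.2 hij, zero_mul])⟩

theorem orthonormal_tmul_right {ι : Type*} (J : HilbertTensorProduct H K) {e f : ι → H}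
    (he : ∀ i, ‖e i‖ = 1) (hf : Orthonormal ℂ f) : Orthonormal ℂ fun i => J.tmul (e i) (f i) :=
  ⟨fun i => by rw [norm_tmul, he, hf.1, one_mul],
    fun i j hij => (J.inner_tmul _ _ _ _).trans (by rw [hf.2 hij, mul_zero])⟩

/-- The bounded operator `a ↦ a ⊗ b`. -/
def tmulRight (J : HilbertTensorProduct H K) (b : H) : H →L[ℂ] K :=
  (J.tmul.flip b).mkContinuous ‖b‖ fun a => by
    rw [LinearMap.flip_apply, norm_tmul, mul_comm]

@[simp]
theorem tmulRight_apply (J : HilbertTensorProduct H K) (a b : H) :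
    J.tmulRight b a = J.tmul a b := rfl

theorem norm_tmulRight_le (J : HilbertTensorProduct H K) (b : H) : ‖J.tmulRight b‖ ≤ ‖b‖ :=
  LinearMap.mkContinuous_norm_le _ (norm_nonneg b) _

variable [CompleteSpace H]

/-- Contraction of the second tensor factor against `b`, i.e. the adjoint of `a ↦ a ⊗ b`. It is
built from the Riesz isomorphism of `H` rather than as `adjoint`, which would also ask for
completeness of the tensor product. -/
def contractRight (J : HilbertTensorProduct H K) (b : H) : K →L[ℂ] H :=
  ((toDual ℂ H).symm : StrongDual ℂ H →L⋆[ℂ] H) ∘SL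
    ((compL ℂ H K ℂ).flip (J.tmulRight b) ∘SL innerSL ℂ)

theorem inner_contractRight (J : HilbertTensorProduct H K) (a b : H) (x : K) :
    ⟪J.contractRight b x, a⟫ = ⟪x, J.tmul a b⟫ := by
  simp [contractRight]

@[simp]
theorem contractRight_tmul (J : HilbertTensorProduct H K) (a b c : H) :
    J.contractRight b (J.tmul a c) = ⟪b, c⟫ • a :=
  ext_inner_right ℂ fun v => by
    rw [inner_contractRight, J.inner_tmul, inner_smul_left, inner_conj_symm, mul_comm]

theorem norm_contractRight_apply_le (J : HilbertTensorProduct H K) (b : H) (x : K) :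
    ‖J.contractRight b x‖ ≤ ‖b‖ * ‖x‖ :=
  calc ‖J.contractRight b x‖ = ‖innerSL ℂ x ∘L J.tmulRight b‖ :=
        (toDual ℂ H).symm.norm_map _
    _ ≤ ‖innerSL ℂ x‖ * ‖J.tmulRight b‖ := opNorm_comp_le _ _
    _ ≤ ‖x‖ * ‖b‖ := by
        rw [innerSL_apply_norm]
        gcongr
        exact J.norm_tmulRight_le b
    _ = ‖b‖ * ‖x‖ := mul_comm _ _

end HilbertTensorProduct

namespace OperatorTensor

theorem op_rankOne (J : OperatorTensor H K) (a a' b b' : H) :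
    J.op (rankOne ℂ a a') (rankOne ℂ b b') = rankOne ℂ (J.tmul a b) (J.tmul a' b') := by
  apply ContinuousLinearMap.ext_on J.dense_span
  rintro _ ⟨⟨c, d⟩, rfl⟩
  simp only [J.op_tmul, rankOne_apply, J.inner_tmul, map_smul, LinearMap.smul_apply, smul_smul]
  rw [mul_comm]

theorem rankOne_tmul_mem_compactSpan (J : OperatorTensor H K) (a a' b b' : H) :
    rankOne ℂ (J.tmul a b) (J.tmul a' b') ∈ J.compactSpan :=
  Submodule.subset_span ⟨_, _, isCompactOperator_rankOne a a', isCompactOperator_rankOne b b',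
    (J.op_rankOne a a' b b').symm⟩

end OperatorTensor

variable [CompleteSpace H]

theorem rankOne_mem_span_isOrthoProj (a b : H) :
    rankOne ℂ a b ∈ Submodule.span ℂ {p : H →L[ℂ] H | IsOrthoProj p} := by
  have diagonal_mem (v : H) :
      rankOne ℂ v v ∈ Submodule.span ℂ {p : H →L[ℂ] H | IsOrthoProj p} := by
    rcases eq_or_ne v 0 with rfl | hv
    · simp
    · have hunit : ‖((‖v‖ : ℂ)⁻¹ • v)‖ = 1 := norm_smul_inv_norm hv
      have hproj := isStarProjection_rankOne_self (𝕜 := ℂ) hunit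
      have hne : (‖v‖ : ℂ) ≠ 0 := by simpa using hv
      have hscale : rankOne ℂ v v =
          (‖v‖ ^ 2 : ℂ) • rankOne ℂ ((‖v‖ : ℂ)⁻¹ • v) ((‖v‖ : ℂ)⁻¹ • v) := by
        simp only [map_smul, map_smulₛₗ, map_inv₀, Complex.conj_ofReal, smul_apply, smul_smul]
        rw [show (‖v‖ : ℂ) ^ 2 * ((‖v‖ : ℂ)⁻¹ * (‖v‖ : ℂ)⁻¹) = 1 by field_simp, one_smul]
      rw [hscale]
      exact Submodule.smul_mem _ _
        (Submodule.subset_span ⟨hproj.isIdempotentElem, hproj.isSelfAdjoint⟩)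
  refine Submodule.span_le.mpr ?_
    (sesquilinear_mem_span_diagonal (toLinearMap₁₂ (rankOne ℂ (E := H) (F := H))) a b)
  rintro _ ⟨v, rfl⟩
  exact diagonal_mem v

/-- The decoherence functional `d_ψ(p, q) = ⟨pψ, qψ⟩` of the vector `ψ`; the arguments are swapped
because `⟪·, ·⟫` is conjugate linear in its first variable. -/
def vectorDF (ψ : H) (p q : H →L[ℂ] H) : ℂ := ⟪q ψ, p ψ⟫

theorem dfBounded_vectorDF (ψ : H) : DFBounded (vectorDF ψ) := by
  have norm_apply_le {p : H →L[ℂ] H} (hp : IsOrthoProj p) : ‖p ψ‖ ≤ ‖ψ‖ := by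
    simpa using p.le_of_opNorm_le (IsStarProjection.norm_le p ⟨hp.1, hp.2⟩) ψ
  refine ⟨‖ψ‖ * ‖ψ‖, fun p q hp hq => (norm_inner_le_norm _ _).trans ?_⟩
  gcongr
  exacts [norm_apply_le hq, norm_apply_le hp]

theorem ExtendsDF.apply_eq_inner {ψ : H} {D : (H →L[ℂ] H) →ₗ[ℂ] (H →L[ℂ] H) →ₗ[ℂ] ℂ}
    (hD : ExtendsDF D (vectorDF ψ)) {x y : H →L[ℂ] H}
    (hx : x ∈ Submodule.span ℂ {p : H →L[ℂ] H | IsOrthoProj p})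
    (hy : y ∈ Submodule.span ℂ {p : H →L[ℂ] H | IsOrthoProj p}) :
    D x y = ⟪ψ, y (x ψ)⟫ := by
  induction hx, hy using Submodule.span_induction₂ with
  | mem_mem p q hp hq =>
    calc D p q = ⟪q ψ, p ψ⟫ := hD p q hp hq
      _ = ⟪ψ, q (p ψ)⟫ := hq.2.isSymmetric ψ (p ψ)
  | zero_left | zero_right => simp
  | add_left x y z _ _ _ hx hy => simp [hx, hy]
  | add_right x y z _ _ _ hx hy => simp [hx, hy]
  | smul_left r x y _ _ h => simp [h]
  | smul_right r x y _ _ h => simp [h]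

section Beta

variable {ψ : H} {J : OperatorTensor H K} {D : (H →L[ℂ] H) →ₗ[ℂ] (H →L[ℂ] H) →ₗ[ℂ] ℂ}
  {β : J.compactSpan →ₗ[ℂ] ℂ}

theorem IsBetaFor.apply_rankOne_tmul (hβ : IsBetaFor J D β) (hD : ExtendsDF D (vectorDF ψ))
    (a a' b b' : H) (hm : rankOne ℂ (J.tmul a b) (J.tmul a' b') ∈ J.compactSpan) :
    β ⟨rankOne ℂ (J.tmul a b) (J.tmul a' b'), hm⟩ =
      ⟪J.tmul a' b', J.tmul ψ (J.contractRight ψ (J.tmul a b))⟫ := by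
  have hop := J.op_rankOne a a' b b'
  calc β ⟨rankOne ℂ (J.tmul a b) (J.tmul a' b'), hm⟩
      = β ⟨J.op (rankOne ℂ a a') (rankOne ℂ b b'), hop ▸ hm⟩ := by simp only [hop]
    _ = D (rankOne ℂ a a') (rankOne ℂ b b') :=
        hβ _ _ (isCompactOperator_rankOne a a') (isCompactOperator_rankOne b b') _
    _ = ⟪ψ, rankOne ℂ b b' (rankOne ℂ a a' ψ)⟫ :=
        hD.apply_eq_inner (rankOne_mem_span_isOrthoProj a a') (rankOne_mem_span_isOrthoProj b b')
    _ = ⟪J.tmul a' b', J.tmul ψ (J.contractRight ψ (J.tmul a b))⟫ := by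
        simp only [rankOne_apply, map_smul, inner_smul_right, J.inner_tmul,
          HilbertTensorProduct.contractRight_tmul]
        ring

theorem IsBetaFor.apply_rankOne (hβ : IsBetaFor J D β) (hD : ExtendsDF D (vectorDF ψ)) {x y : K}
    (hx : x ∈ J.algSpan) (hy : y ∈ J.algSpan) (hm : rankOne ℂ x y ∈ J.compactSpan) :
    β ⟨rankOne ℂ x y, hm⟩ = ⟪y, J.tmul ψ (J.contractRight ψ x)⟫ := by
  -- Extending `β` to all of `B(K)` makes both sides sesquilinear in `(x, y)` on all of `K × K`.
  obtain ⟨Φ, hΦ⟩ := β.exists_extend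
  have hΦβ (S : J.compactSpan) : Φ S = β S := LinearMap.congr_fun hΦ S
  rw [← hΦβ]
  change Φ (rankOne ℂ x y) = _
  clear hm
  induction hx, hy using Submodule.span_induction₂ with
  | mem_mem x y hx hy =>
    obtain ⟨⟨a, b⟩, rfl⟩ := hx
    obtain ⟨⟨a', b'⟩, rfl⟩ := hy
    exact (hΦβ ⟨_, J.rankOne_tmul_mem_compactSpan a a' b b'⟩).trans
      (hβ.apply_rankOne_tmul hD a a' b b' _)
  | zero_left | zero_right => simp
  | add_left x y z _ _ _ hx hy => simp [hx, hy]
  | add_right x y z _ _ _ hx hy => simp [hx, hy]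
  | smul_left r x y _ _ h => simp [h]
  | smul_right r x y _ _ h => simp [h, mul_comm]

theorem IsBetaFor.betaTraciallyBounded (hβ : IsBetaFor J D β) (hD : ExtendsDF D (vectorDF ψ)) :
    BetaTraciallyBounded J β := by
  refine ⟨‖ψ‖ * ‖ψ‖, fun ξ hξ hnorm hm => ?_⟩
  calc ‖β ⟨rankOneProj ξ, hm⟩‖
      = ‖⟪ξ, J.tmul ψ (J.contractRight ψ ξ)⟫‖ := congrArg norm (hβ.apply_rankOne hD hξ hξ hm)
    _ ≤ ‖ξ‖ * (‖ψ‖ * ‖J.contractRight ψ ξ‖) := by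
        rw [← J.norm_tmul]
        exact norm_inner_le_norm _ _
    _ ≤ ‖ξ‖ * (‖ψ‖ * (‖ψ‖ * ‖ξ‖)) := by
        gcongr
        exact J.norm_contractRight_apply_le ψ ξ
    _ = ‖ψ‖ * ‖ψ‖ := by rw [hnorm, one_mul, mul_one]

theorem IsBetaFor.exists_norm_le_one_apply_eq_card_mul (hβ : IsBetaFor J D β)
    (hD : ExtendsDF D (vectorDF ψ)) (hψ : ψ ≠ 0) {ι : Type*} {e : ι → H} (he : Orthonormal ℂ e)
    (s : Finset ι) :
    ∃ S : J.compactSpan, ‖(S : K →L[ℂ] K)‖ ≤ 1 ∧ β S = s.card * (‖ψ‖ : ℂ) ^ 2 := by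
  obtain ⟨φ, hφ, hφψ⟩ : ∃ φ : H, ‖φ‖ = 1 ∧ ψ = (‖ψ‖ : ℂ) • φ :=
    ⟨(‖ψ‖ : ℂ)⁻¹ • ψ, norm_smul_inv_norm hψ,
      (smul_inv_smul₀ (by simpa using hψ) ψ).symm⟩
  refine ⟨∑ i ∈ s, ⟨rankOne ℂ (J.tmul (e i) φ) (J.tmul φ (e i)),
    J.rankOne_tmul_mem_compactSpan _ _ _ _⟩, ?_, ?_⟩
  · simpa only [Submodule.coe_sum] using norm_sum_rankOne_le_one
      (J.orthonormal_tmul_left he fun _ => hφ) (J.orthonormal_tmul_right (fun _ => hφ) he) _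
  · have hterm (i : ι) :
        β ⟨rankOne ℂ (J.tmul (e i) φ) (J.tmul φ (e i)), J.rankOne_tmul_mem_compactSpan _ _ _ _⟩ =
          (‖ψ‖ : ℂ) ^ 2 := by
      have hφψ_inner : ⟪φ, ψ⟫ = ‖ψ‖ := by
        nth_rw 1 [hφψ]
        simp [hφ]
      have hψφ_inner : ⟪ψ, φ⟫ = ‖ψ‖ := by
        rw [← inner_conj_symm, hφψ_inner, Complex.conj_ofReal]
      rw [hβ.apply_rankOne_tmul hD, J.contractRight_tmul, J.inner_tmul, inner_smul_right,
        hφψ_inner, hψφ_inner, inner_self_eq_norm_sq_to_K, he.1]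
      simp [sq]
    simp only [map_sum, hterm, Finset.sum_const, nsmul_eq_mul]

end Beta

theorem not_isTensorBounded_vectorDF (hH : ¬ FiniteDimensional ℂ H) {ψ : H} (hψ : ψ ≠ 0)
    (J : OperatorTensor H K) : ¬ IsTensorBounded J (vectorDF ψ) := by
  rintro ⟨D, -, hD, β, hβ, C, hC⟩
  obtain ⟨e, he⟩ := exists_orthonormal_nat hH
  have hbound (n : ℕ) : n * ‖ψ‖ ^ 2 ≤ |C| := by
    obtain ⟨S, hS, hβS⟩ := hβ.exists_norm_le_one_apply_eq_card_mul hD hψ he (Finset.range n)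
    calc n * ‖ψ‖ ^ 2 = ‖β S‖ := by simp [hβS]
      _ ≤ C * ‖(S : K →L[ℂ] K)‖ := hC S
      _ ≤ |C| * 1 := mul_le_mul (le_abs_self C) hS (norm_nonneg _) (abs_nonneg C)
      _ = |C| := mul_one _
  obtain ⟨n, hn⟩ := exists_nat_gt (|C| / ‖ψ‖ ^ 2)
  have hψsq : 0 < ‖ψ‖ ^ 2 := by positivity
  exact ((div_lt_iff₀ hψsq).mp hn).not_ge (hbound n)

theorem stmt_14_general (hinf : ¬ FiniteDimensional ℂ H) {ψ : H} (hψ : ψ ≠ 0)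
    {J : OperatorTensor H K} {D : (H →L[ℂ] H) →ₗ[ℂ] (H →L[ℂ] H) →ₗ[ℂ] ℂ}
    (hD : IsBoundedBilinear D) (hDd : ExtendsDF D (vectorDF ψ))
    {β : J.compactSpan →ₗ[ℂ] ℂ} (hβ : IsBetaFor J D β) :
    BetaTraciallyBounded J β ∧ IsTraciallyBounded J (vectorDF ψ) ∧
      ¬ IsTensorBounded J (vectorDF ψ) :=
  have hβ_bounded := hβ.betaTraciallyBounded hDd
  ⟨hβ_bounded, ⟨dfBounded_vectorDF ψ, D, hD, hDd, β, hβ, hβ_bounded⟩,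
    not_isTensorBounded_vectorDF hinf hψ J⟩

/-- The decoherence functional `d_ψ(p,q) = ⟨pψ, qψ⟩` on a
separable infinite dimensional Hilbert space is tracially bounded: its
associated functional `β_ψ` is uniformly bounded on the projections `p_ξ`,
`ξ` a unit vector of `𝔥 ⊗_alg 𝔥`. Consequently tracial boundedness is strictly
weaker than tensor boundedness: `d_ψ` is tracially bounded but not tensor
bounded. -/
theorem stmt_14 [TopologicalSpace.SeparableSpace E] (hinf : ¬ FiniteDimensional ℂ E)
    (ψ : E) (hψ : ‖ψ‖ = 1)
    (J : OperatorTensor E G)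
    (D : (E →L[ℂ] E) →ₗ[ℂ] (E →L[ℂ] E) →ₗ[ℂ] ℂ)
    (hD : IsBoundedBilinear D)
    (hDd : ExtendsDF D (fun p q : E →L[ℂ] E => ⟪q ψ, p ψ⟫))
    (β : ↥J.compactSpan →ₗ[ℂ] ℂ) (hβ : IsBetaFor J D β) :
    BetaTraciallyBounded J β ∧
    IsTraciallyBounded J (fun p q : E →L[ℂ] E => ⟪q ψ, p ψ⟫) ∧
    ¬ IsTensorBounded J (fun p q : E →L[ℂ] E => ⟪q ψ, p ψ⟫) := by
  exact stmt_14_general hinf (norm_ne_zero_iff.mp (hψ ▸ one_ne_zero)) hD hDd hβ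
end
end

section
/- Let 𝔥 be a separable complex Hilbert space of dimension greater than two and let d be a tracially bounded decoherence functional for 𝔥, with associated functional β on K(𝔥) • K(𝔥) and representing families {𝔛ᵢ}, {𝔜ᵢ} of trace class operators with β(S) = Σᵢ tr(S(𝔛ᵢ ⊗ 𝔛ᵢ* − 𝔜ᵢ ⊗ 𝔜ᵢ*)) for S ∈ K(𝔥) • K(𝔥). Then there exists a constant C such that |Σᵢ ⟨(𝔛ᵢ ⊗ 𝔛ᵢ* − 𝔜ᵢ ⊗ 𝔜ᵢ*)ξ, η⟩| ≤ C‖ξ‖‖η‖ for all ξ, η in the algebraic tensor product 𝔥 ⊗_alg 𝔥; consequently there is a bounded linear operator 𝔐 on 𝔥 ⊗ 𝔥 with ⟨𝔐ξ, η⟩ = Σᵢ ⟨(𝔛ᵢ ⊗ 𝔛ᵢ* − 𝔜ᵢ ⊗ 𝔜ᵢ*)ξ, η⟩ for all such ξ, η. -/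
/- Common background definitions: decoherence functionals on the projection
lattice of a complex Hilbert space, boundedness/additivity notions, trace class
operators, and an axiomatisation of the Hilbert space tensor product
`𝔥 ⊗ 𝔥` together with the operator tensor product. -/

noncomputable section

open scoped ComplexInnerProductSpace ComplexOrder
open ContinuousLinearMap

universe u

variable {E : Type u} [NormedAddCommGroup E] [InnerProductSpace ℂ E] [CompleteSpace E]
variable {G : Type u} [NormedAddCommGroup G] [InnerProductSpace ℂ G] [CompleteSpace G]

/-! The functional `β` defines a sesquilinear form `(η, ξ) ↦ β (|ξ⟩⟨η|)` on the algebraic tensor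
product, since `|ξ⟩⟨η|` is a finite sum of tensors of rank-one operators. Tracial boundedness bounds
its diagonal on the unit sphere, and polarization turns this into a bound for the whole form. As
`tr (|ξ⟩⟨η| T) = ⟪η, T ξ⟫`, the representation of `β` identifies the form with the sum of the
matrix elements of the representing operators. Extending the form to the Hilbert tensor product and
applying Fréchet–Riesz gives the operator. -/

open InnerProductSpace (rankOne rankOne_apply)

section SesquilinearForm

theorem sesqForm_polarization {V F : Type*} [AddCommGroup V] [Module ℂ V] [AddCommGroup F]
    [Module ℂ F] (f : V →ₗ⋆[ℂ] V →ₗ[ℂ] F) (x y : V) :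
    (4 : ℂ) • f x y = f (x + y) (x + y) - f (x - y) (x - y)
      - Complex.I • f (x + Complex.I • y) (x + Complex.I • y)
      + Complex.I • f (x - Complex.I • y) (x - Complex.I • y) := by
  simp only [map_add, map_sub, map_smulₛₗ, LinearMap.add_apply, LinearMap.sub_apply,
    LinearMap.smul_apply, RingHom.id_apply, Complex.conj_I]
  match_scalars <;> ring_nf <;> norm_num [Complex.I_sq]

section Normalize

variable {𝕜 V W F : Type*} [RCLike 𝕜] [NormedAddCommGroup V] [NormedSpace 𝕜 V]
  [NormedAddCommGroup W] [NormedSpace 𝕜 W] [SeminormedAddCommGroup F] [NormedSpace 𝕜 F]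

theorem norm_sesqForm_normalize (f : V →ₗ⋆[𝕜] W →ₗ[𝕜] F) (x : V) (y : W) :
    ‖f ((‖x‖⁻¹ : 𝕜) • x) ((‖y‖⁻¹ : 𝕜) • y)‖ = ‖f x y‖ / (‖x‖ * ‖y‖) := by
  simp only [map_smulₛₗ, LinearMap.smul_apply, norm_smul, RingHom.id_apply, RCLike.norm_conj,
    norm_inv, RCLike.norm_ofReal, abs_norm]
  ring

theorem sesqForm_bound_of_sphere_bound (f : V →ₗ⋆[𝕜] W →ₗ[𝕜] F) {C : ℝ}
    (hf : ∀ x y, ‖x‖ = 1 → ‖y‖ = 1 → ‖f x y‖ ≤ C) (x : V) (y : W) :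
    ‖f x y‖ ≤ C * ‖x‖ * ‖y‖ := by
  rcases eq_or_ne x 0 with rfl | hx
  · simp
  rcases eq_or_ne y 0 with rfl | hy
  · simp
  have hunit := hf _ _ (norm_smul_inv_norm (𝕜 := 𝕜) hx) (norm_smul_inv_norm (𝕜 := 𝕜) hy)
  rwa [norm_sesqForm_normalize, div_le_iff₀ (by positivity), ← mul_assoc] at hunit

theorem sesqForm_self_bound_of_sphere_bound (f : V →ₗ⋆[𝕜] V →ₗ[𝕜] F) {C : ℝ}
    (hf : ∀ x, ‖x‖ = 1 → ‖f x x‖ ≤ C) (x : V) : ‖f x x‖ ≤ C * ‖x‖ ^ 2 := by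
  rcases eq_or_ne x 0 with rfl | hx
  · simp
  have hunit := hf _ (norm_smul_inv_norm (𝕜 := 𝕜) hx)
  rwa [norm_sesqForm_normalize, div_le_iff₀ (by positivity), ← sq] at hunit

end Normalize

theorem sesqForm_bound_of_self_sphere_bound {V F : Type*} [NormedAddCommGroup V]
    [InnerProductSpace ℂ V] [SeminormedAddCommGroup F] [NormedSpace ℂ F]
    (f : V →ₗ⋆[ℂ] V →ₗ[ℂ] F) {C : ℝ} (hf : ∀ x, ‖x‖ = 1 → ‖f x x‖ ≤ C) (x y : V) :
    ‖f x y‖ ≤ 2 * C * ‖x‖ * ‖y‖ := by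
  refine sesqForm_bound_of_sphere_bound f (fun x y hx hy => ?_) x y
  have hdiag := sesqForm_self_bound_of_sphere_bound f hf
  have hIy : ‖Complex.I • y‖ = 1 := by simp [norm_smul, hy]
  have hsum : ∀ z : V, ‖z‖ = 1 → ‖x + z‖ ^ 2 + ‖x - z‖ ^ 2 = 4 := fun z hz => by
    have := parallelogram_law_with_norm ℂ x z
    rw [hx, hz] at this
    linear_combination this
  have hpolar : 4 * ‖f x y‖ ≤ 8 * C := calc
    4 * ‖f x y‖ = ‖(4 : ℂ) • f x y‖ := by simp [norm_smul]
    _ ≤ ‖f (x + y) (x + y)‖ + ‖f (x - y) (x - y)‖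
        + ‖f (x + Complex.I • y) (x + Complex.I • y)‖
        + ‖f (x - Complex.I • y) (x - Complex.I • y)‖ := by
      rw [sesqForm_polarization]
      refine (norm_add_le_of_le (norm_sub_le_of_le (norm_sub_le _ _) le_rfl) le_rfl).trans ?_
      simp only [norm_smul, Complex.norm_I, one_mul, le_refl]
    _ ≤ C * ‖x + y‖ ^ 2 + C * ‖x - y‖ ^ 2
        + C * ‖x + Complex.I • y‖ ^ 2 + C * ‖x - Complex.I • y‖ ^ 2 := by
      gcongr <;> apply hdiag
    _ = 8 * C := by linear_combination C * hsum y hy + C * hsum _ hIy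
  linarith

theorem exists_sesq_extension_of_denseRange {𝕜 𝕜₁ 𝕜₂ V₁ V₂ H₁ H₂ F : Type*}
    [NontriviallyNormedField 𝕜] [NontriviallyNormedField 𝕜₁] [NontriviallyNormedField 𝕜₂]
    {σ₁ : 𝕜₁ →+* 𝕜} {σ₂ : 𝕜₂ →+* 𝕜} [RingHomIsometric σ₁] [RingHomIsometric σ₂]
    [SeminormedAddCommGroup V₁] [NormedSpace 𝕜₁ V₁]
    [SeminormedAddCommGroup V₂] [NormedSpace 𝕜₂ V₂]
    [SeminormedAddCommGroup H₁] [NormedSpace 𝕜₁ H₁]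
    [SeminormedAddCommGroup H₂] [NormedSpace 𝕜₂ H₂]
    [NormedAddCommGroup F] [NormedSpace 𝕜 F] [CompleteSpace F]
    {e₁ : V₁ →ₗᵢ[𝕜₁] H₁} {e₂ : V₂ →ₗᵢ[𝕜₂] H₂} (h₁ : DenseRange e₁) (h₂ : DenseRange e₂)
    (f : V₁ →SL[σ₁] V₂ →SL[σ₂] F) :
    ∃ B : H₁ →SL[σ₁] H₂ →SL[σ₂] F, ∀ x y, B (e₁ x) (e₂ y) = f x y := by
  let A := f.extend e₁.toContinuousLinearMap
  have hA (x : V₁) : A (e₁ x) = f x := f.extend_eq h₁ e₁.isometry.isUniformInducing x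
  let B := A.flip.extend e₂.toContinuousLinearMap
  have hB (y : V₂) : B (e₂ y) = A.flip y :=
    A.flip.extend_eq (e := e₂.toContinuousLinearMap) h₂ e₂.isometry.isUniformInducing y
  exact ⟨B.flip, fun x y => by rw [flip_apply, hB, flip_apply, hA]⟩

open scoped InnerProductSpace in
theorem exists_clm_inner_eq_of_dense {𝕜 H : Type*} [RCLike 𝕜] [NormedAddCommGroup H]
    [InnerProductSpace 𝕜 H] [CompleteSpace H] {V : Submodule 𝕜 H} (hV : Dense (V : Set H))
    (f : V →ₗ⋆[𝕜] V →ₗ[𝕜] 𝕜) {C : ℝ} (hf : ∀ x y, ‖f x y‖ ≤ C * ‖x‖ * ‖y‖) :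
    ∃ M : H →L[𝕜] H, ∀ x y : V, ⟪(x : H), M y⟫_𝕜 = f x y := by
  have hdense : DenseRange V.subtypeₗᵢ := by simpa [DenseRange] using hV
  obtain ⟨B, hB⟩ := exists_sesq_extension_of_denseRange hdense hdense (f.mkContinuous₂ C hf)
  refine ⟨adjoint (InnerProductSpace.continuousLinearMapOfBilin B), fun x y => ?_⟩
  rw [adjoint_inner_right, InnerProductSpace.continuousLinearMapOfBilin_apply]
  exact hB x y

end SesquilinearForm

section RankOne

theorem isCompactOperator_rankOne_s15 {𝕜 V W : Type*} [RCLike 𝕜] [SeminormedAddCommGroup V]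
    [NormedSpace 𝕜 V] [SeminormedAddCommGroup W] [InnerProductSpace 𝕜 W] (x : V) (y : W) :
    IsCompactOperator (rankOne 𝕜 x y) :=
  (isCompactOperator_of_locallyCompactSpace_dom (innerSL 𝕜 y)).clm_comp
    (ContinuousLinearMap.toSpanSingleton 𝕜 x)

variable {W : Type*} [NormedAddCommGroup W] [InnerProductSpace ℂ W]

theorem rankOneProj_eq_rankOne (x : W) : rankOneProj x = rankOne ℂ x x :=
  rfl

theorem hasFiniteRank_rankOne (x y : W) : HasFiniteRank (rankOne ℂ x y) := by
  refine Submodule.finiteDimensional_of_le (S₂ := Submodule.span ℂ {x}) ?_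
  rintro _ ⟨z, rfl⟩
  exact Submodule.smul_mem _ _ (Submodule.mem_span_singleton_self x)

theorem traceAlong_rankOne {ι : Type*} (b : HilbertBasis ι ℂ W) (x y : W) :
    traceAlong b (rankOne ℂ x y) = ⟪y, x⟫ := by
  simp only [traceAlong, rankOne_apply, inner_smul_right, b.tsum_inner_mul_inner]

theorem traceAlong_rankOne_mul [CompleteSpace W] {ι : Type*} (b : HilbertBasis ι ℂ W) (x y : W)
    (T : W →L[ℂ] W) : traceAlong b (rankOne ℂ x y * T) = ⟪y, T x⟫ := by
  rw [mul_def, InnerProductSpace.rankOne_comp, traceAlong_rankOne, adjoint_inner_left]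

end RankOne

namespace OperatorTensor

variable {V W : Type u} [NormedAddCommGroup V] [InnerProductSpace ℂ V]
  [NormedAddCommGroup W] [InnerProductSpace ℂ W] (J : OperatorTensor V W)

theorem rankOne_tmul_tmul (a b c d : V) :
    rankOne ℂ (J.tmul a b) (J.tmul c d) = J.op (rankOne ℂ a c) (rankOne ℂ b d) := by
  apply ContinuousLinearMap.ext_on J.dense_span
  rintro _ ⟨⟨x, y⟩, rfl⟩
  simp only [rankOne_apply, J.op_tmul, J.inner_tmul, map_smul, LinearMap.smul_apply, smul_smul,
    mul_comm]

theorem rankOne_mem_compactSpan {ξ η : W} (hξ : ξ ∈ J.algSpan) (hη : η ∈ J.algSpan) :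
    rankOne ℂ ξ η ∈ J.compactSpan := by
  induction hξ, hη using Submodule.span_induction₂ with
  | mem_mem _ _ hx hy =>
    obtain ⟨⟨a, b⟩, rfl⟩ := hx
    obtain ⟨⟨c, d⟩, rfl⟩ := hy
    exact Submodule.subset_span ⟨_, _, isCompactOperator_rankOne_s15 a c, isCompactOperator_rankOne_s15 b d,
      J.rankOne_tmul_tmul a b c d⟩
  | zero_left => simp
  | zero_right => simp
  | add_left _ _ _ _ _ _ h₁ h₂ => simpa using add_mem h₁ h₂
  | add_right _ _ _ _ _ _ h₁ h₂ => simpa using add_mem h₁ h₂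
  | smul_left r _ _ _ _ h => simpa using Submodule.smul_mem _ r h
  | smul_right r _ _ _ _ h => simpa using Submodule.smul_mem _ (starRingEnd ℂ r) h

/-- The sesquilinear form `(η, ξ) ↦ β (|ξ⟩⟨η|)` on the algebraic tensor product attached to a linear
functional `β` on `K(𝔥) • K(𝔥)`. Its values at `(ξ, ξ)` are the `β (p_ξ)` of the definition of
tracial boundedness. -/
def rankOneForm (β : J.compactSpan →ₗ[ℂ] ℂ) : J.algSpan →ₗ⋆[ℂ] J.algSpan →ₗ[ℂ] ℂ :=
  LinearMap.mk₂'ₛₗ (starRingEnd ℂ) (RingHom.id ℂ)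
    (fun η ξ => β ⟨rankOne ℂ (ξ : W) (η : W), J.rankOne_mem_compactSpan ξ.2 η.2⟩)
    (fun _ _ _ => by rw [← map_add]; congr 1; ext1; simp)
    (fun _ _ _ => by rw [← map_smul]; congr 1; ext1; simp)
    (fun _ _ _ => by rw [← map_add]; congr 1; ext1; simp)
    (fun _ _ _ => by rw [← map_smul]; congr 1; ext1; simp)

theorem rankOneForm_apply (β : J.compactSpan →ₗ[ℂ] ℂ) (η ξ : J.algSpan) :
    J.rankOneForm β η ξ = β ⟨rankOne ℂ (ξ : W) (η : W), J.rankOne_mem_compactSpan ξ.2 η.2⟩ :=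
  rfl

variable {J} {β : J.compactSpan →ₗ[ℂ] ℂ}

theorem exists_rankOneForm_bound (hβ : BetaTraciallyBounded J β) :
    ∃ C : ℝ, ∀ η ξ : J.algSpan, ‖J.rankOneForm β η ξ‖ ≤ C * ‖η‖ * ‖ξ‖ := by
  obtain ⟨C, hC⟩ := hβ
  refine ⟨2 * C, sesqForm_bound_of_self_sphere_bound _ fun ξ hξ => ?_⟩
  simpa only [rankOneForm_apply, rankOneProj_eq_rankOne] using
    hC ξ ξ.2 hξ (J.rankOne_mem_compactSpan ξ.2 ξ.2)

theorem hasSum_inner_rankOneForm [CompleteSpace W] {I ι : Type*} {T : I → W →L[ℂ] W}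
    (b : HilbertBasis ι ℂ W)
    (hrep : ∀ S : J.compactSpan, HasFiniteRank (S : W →L[ℂ] W) →
      HasSum (fun i => traceAlong b ((S : W →L[ℂ] W) * T i)) (β S))
    (η ξ : J.algSpan) :
    HasSum (fun i => ⟪(η : W), T i ξ⟫) (J.rankOneForm β η ξ) := by
  simpa only [traceAlong_rankOne_mul, rankOneForm_apply] using
    hrep ⟨_, J.rankOne_mem_compactSpan ξ.2 η.2⟩ (hasFiniteRank_rankOne _ _)

end OperatorTensor

theorem stmt_15_general {V W : Type u} [NormedAddCommGroup V] [InnerProductSpace ℂ V]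
    [NormedAddCommGroup W] [InnerProductSpace ℂ W] [CompleteSpace W]
    (J : OperatorTensor V W) (β : J.compactSpan →ₗ[ℂ] ℂ) (hβ : BetaTraciallyBounded J β)
    {I ι : Type*} (T : I → W →L[ℂ] W) (b : HilbertBasis ι ℂ W)
    (hrep : ∀ S : J.compactSpan, HasFiniteRank (S : W →L[ℂ] W) →
      HasSum (fun i => traceAlong b ((S : W →L[ℂ] W) * T i)) (β S)) :
    (∃ C : ℝ, ∀ ξ η : W, ξ ∈ J.algSpan → η ∈ J.algSpan →
      Summable (fun i => ⟪η, T i ξ⟫) ∧ ‖∑' i, ⟪η, T i ξ⟫‖ ≤ C * ‖ξ‖ * ‖η‖) ∧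
    ∃ M : W →L[ℂ] W, ∀ ξ η : W, ξ ∈ J.algSpan → η ∈ J.algSpan →
      ⟪η, M ξ⟫ = ∑' i, ⟪η, T i ξ⟫ := by
  have hsum := OperatorTensor.hasSum_inner_rankOneForm b hrep
  obtain ⟨C, hC⟩ := OperatorTensor.exists_rankOneForm_bound hβ
  obtain ⟨M, hM⟩ := exists_clm_inner_eq_of_dense J.dense_span (J.rankOneForm β) hC
  refine ⟨⟨C, fun ξ η hξ hη => ⟨(hsum ⟨η, hη⟩ ⟨ξ, hξ⟩).summable, ?_⟩⟩, M, fun ξ η hξ hη => ?_⟩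
  · rw [(hsum ⟨η, hη⟩ ⟨ξ, hξ⟩).tsum_eq, mul_right_comm]
    exact hC ⟨η, hη⟩ ⟨ξ, hξ⟩
  · rw [(hsum ⟨η, hη⟩ ⟨ξ, hξ⟩).tsum_eq]
    exact hM ⟨η, hη⟩ ⟨ξ, hξ⟩

/-- Let `d` be a tracially bounded decoherence functional on a
separable Hilbert space of dimension greater than two, with associated
functional `β` represented by families `{𝔛ᵢ}, {𝔜ᵢ}` of trace class operators.
Then there is a constant `C` with
`|∑ᵢ ⟨(𝔛ᵢ ⊗ 𝔛ᵢ* − 𝔜ᵢ ⊗ 𝔜ᵢ*) ξ, η⟩| ≤ C ‖ξ‖ ‖η‖` for all `ξ, η ∈ 𝔥 ⊗_alg 𝔥`;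
consequently there is a bounded operator `𝔐` on `𝔥 ⊗ 𝔥` with
`⟨𝔐 ξ, η⟩ = ∑ᵢ ⟨(𝔛ᵢ ⊗ 𝔛ᵢ* − 𝔜ᵢ ⊗ 𝔜ᵢ*) ξ, η⟩` for all such `ξ, η`. -/
theorem stmt_15 [TopologicalSpace.SeparableSpace E] (hdim : 2 < Module.rank ℂ E)
    (d : (E →L[ℂ] E) → (E →L[ℂ] E) → ℂ) (hd : IsDecoherenceFunctional d)
    (J : OperatorTensor E G) (htb : IsTraciallyBounded J d)
    (D : (E →L[ℂ] E) →ₗ[ℂ] (E →L[ℂ] E) →ₗ[ℂ] ℂ)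
    (hD : IsBoundedBilinear D) (hDd : ExtendsDF D d)
    (β : ↥J.compactSpan →ₗ[ℂ] ℂ) (hβ : IsBetaFor J D β)
    (hβtb : BetaTraciallyBounded J β)
    {I : Type u} (X Y : I → E →L[ℂ] E)
    (hX : ∀ i, IsTraceClass (X i)) (hY : ∀ i, IsTraceClass (Y i))
    {ιG : Type u} (bG : HilbertBasis ιG ℂ G)
    (hrep : ∀ S : J.compactSpan,
      HasSum (fun i => traceAlong bG ((S : G →L[ℂ] G) *
        (J.op (X i) (adjoint (X i)) - J.op (Y i) (adjoint (Y i))))) (β S)) :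
    (∃ C : ℝ, ∀ ξ η : G,
      ξ ∈ J.toHilbertTensorProduct.algSpan → η ∈ J.toHilbertTensorProduct.algSpan →
      Summable (fun i =>
        (⟪η, (J.op (X i) (adjoint (X i)) - J.op (Y i) (adjoint (Y i))) ξ⟫ : ℂ)) ∧
      ‖∑' i, (⟪η, (J.op (X i) (adjoint (X i)) - J.op (Y i) (adjoint (Y i))) ξ⟫ : ℂ)‖ ≤
        C * ‖ξ‖ * ‖η‖) ∧
    ∃ M : G →L[ℂ] G, ∀ ξ η : G,
      ξ ∈ J.toHilbertTensorProduct.algSpan → η ∈ J.toHilbertTensorProduct.algSpan →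
      (⟪η, M ξ⟫ : ℂ) =
        ∑' i, (⟪η, (J.op (X i) (adjoint (X i)) - J.op (Y i) (adjoint (Y i))) ξ⟫ : ℂ) :=
  stmt_15_general J β hβtb _ bG fun S _ => hrep S
end
end
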